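/- Let 1 < p ≤ 2 with conjugate exponent p′, and let s, r ∈ ℝ satisfy s > −1/2 + 1/(2p), r ≥ |s|, r > 2/p − 1 and r ≤ 1 + s. Then there exist ε > 0, σ, ρ with 1/p < σ < 1 and 1/p < ρ < 1, and a constant C > 0, such that for each choice of sign ± and all measurable functions v₁, v₂, w : ℝ² → [0, ∞], ∫∫∫∫_{ℝ⁴} [v₁(ξ₁, τ₁) v₂(−ξ₂, −τ₂) w(ξ, τ)] / [⟨ξ₁⟩^{s} ⟨τ₁ − ξ₁⟩^{σ} ⟨ξ₂⟩^{s} ⟨τ₂ + ξ₂⟩^{σ} ⟨ξ⟩^{1−r} ⟨τ ± |ξ|⟩^{1−ρ−ε}] dξ₁ dτ₁ dξ₂ dτ₂ ≤ C · ‖v₁‖_{L^{p′}(ℝ²)} · ‖v₂‖_{L^{p′}(ℝ²)} · ‖w‖_{L^{p}(ℝ²)}, where ξ := ξ₁ + ξ₂ and τ := τ₁ + τ₂, all quantities understood in [0, ∞]. -/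

import Mathlib

open MeasureTheory

/-- Japanese bracket ⟨x⟩ = (1 + x²)^{1/2}. -/
noncomputable def jap (x : ℝ) : ℝ := Real.sqrt (1 + x ^ 2)

/-!
Write `a = τ₁ - ξ₁`, `b = τ₂ + ξ₂`, and let `t = max 0 (-s)`, so that `2 t < 1 / p'`. The parameters
are chosen with `1 - ρ - ε = 2 t` and `κ = σ - 2 t > 1 / p`.

The weight is bounded below by a multiple of `⟨a⟩ ^ κ * ⟨b⟩ ^ κ` (`weight_lower_bound`):

* for `s ≥ 0`, because `⟨ξ⟩ ^ (r - 1) ≤ ⟨ξ⟩ ^ s ≲ ⟨ξ₁⟩ ^ s * ⟨ξ₂⟩ ^ s`;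
* for `s < 0`, because `τ ± |ξ|` is one of `a + b + 2 ξ₁` and `a + b - 2 ξ₂`, so one of `⟨ξ₁⟩`, `⟨ξ₂⟩`
  is `≲ ⟨τ ± |ξ|⟩⟨a⟩⟨b⟩`, and each of them is at most `2 ⟨ξ⟩` times the other. Hence
  `⟨ξ₁⟩⟨ξ₂⟩ ≲ ⟨ξ⟩ (⟨τ ± |ξ|⟩⟨a⟩⟨b⟩)²` (`resonance`), whose `t`-th power costs the exponent `2 t`
  of `⟨τ ± |ξ|⟩` and lowers the exponents of `⟨a⟩` and `⟨b⟩` from `σ` to `κ`.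

Hölder's inequality on `ℝ⁴` with the factors `v₁ v₂` and `w ⟨a⟩ ^ (-κ) ⟨b⟩ ^ (-κ)` then leaves the
integral of `⟨a⟩ ^ (-κ p) ⟨b⟩ ^ (-κ p)` over `(ξ₁, τ₁)` for fixed `(ξ, τ)`. As `(ξ₁, τ₁) ↦ (a, b)` is
affine with Jacobian of modulus `2`, this is a constant, finite since `κ p > 1` (`lintegral_null_coords`).
-/

section Brackets

lemma one_le_jap (x : ℝ) : 1 ≤ jap x := by
  rw [jap, Real.one_le_sqrt]; nlinarith [sq_nonneg x]

lemma jap_pos (x : ℝ) : 0 < jap x := lt_of_lt_of_le one_pos (one_le_jap x)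

lemma jap_neg (x : ℝ) : jap (-x) = jap x := by simp [jap]

lemma jap_add_le (x y : ℝ) : jap (x + y) ≤ 2 * (jap x * jap y) := by
  have h : jap x * jap y = Real.sqrt ((1 + x ^ 2) * (1 + y ^ 2)) := by
    rw [jap, jap, Real.sqrt_mul (by positivity)]
  rw [h, jap, Real.sqrt_le_left (by positivity), mul_pow, Real.sq_sqrt (by positivity)]
  nlinarith [sq_nonneg (x - y), sq_nonneg (x * y), sq_nonneg x, sq_nonneg y]

lemma jap_le_two_mul (x : ℝ) : jap x ≤ jap (2 * x) := by
  apply Real.sqrt_le_sqrt; nlinarith [sq_nonneg x]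

lemma measurable_jap : Measurable jap := by unfold jap; fun_prop

/-- If twice one of the two frequencies, up to sign, equals `a + b - q`, the product of their brackets
is controlled by the bracket of their sum and by those of `q`, `a`, `b`. -/
lemma resonance_aux {x y a b q : ℝ} (h : 2 * x = a + b - q ∨ 2 * x = q - (a + b)) :
    jap x * jap y ≤ 32 * (jap (x + y) * jap q ^ 2 * (jap a * jap b) ^ 2) := by
  have hc : jap (2 * x) ≤ 2 * (jap (a + b) * jap q) := by
    rcases h with h | h
    · rw [h, sub_eq_add_neg, ← jap_neg q]; exact jap_add_le _ _
    · rw [h, sub_eq_add_neg, ← jap_neg (a + b), mul_comm (jap (-(a + b)))]; exact jap_add_le _ _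
  have h1 : jap x ≤ 4 * (jap q * (jap a * jap b)) := by
    have := mul_le_mul_of_nonneg_right (jap_add_le a b) (jap_pos q).le
    linarith [jap_le_two_mul x]
  have h2 : jap y ≤ 2 * (jap (x + y) * jap x) := by
    have := jap_add_le (x + y) (-x)
    rwa [jap_neg, add_neg_cancel_comm] at this
  calc jap x * jap y ≤ jap x * (2 * (jap (x + y) * jap x)) := by
        gcongr; exact (jap_pos x).le
    _ = 2 * jap (x + y) * jap x ^ 2 := by ring
    _ ≤ 2 * jap (x + y) * (4 * (jap q * (jap a * jap b))) ^ 2 := by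
        have := jap_pos (x + y)
        have := jap_pos x
        gcongr
    _ = _ := by ring

lemma resonance {sgn : ℝ} (hsgn : sgn = 1 ∨ sgn = -1) (x₁ t₁ x₂ t₂ : ℝ) :
    jap x₁ * jap x₂ ≤ 32 * (jap (x₁ + x₂) * jap (t₁ + t₂ + sgn * |x₁ + x₂|) ^ 2 *
      (jap (t₁ - x₁) * jap (t₂ + x₂)) ^ 2) := by
  have h : sgn * |x₁ + x₂| = x₁ + x₂ ∨ sgn * |x₁ + x₂| = -(x₁ + x₂) := by
    rcases hsgn with rfl | rfl <;> rcases abs_choice (x₁ + x₂) with h | h <;> rw [h] <;> simp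
  rcases h with h | h
  · exact resonance_aux (Or.inr (by rw [h]; ring))
  · rw [mul_comm (jap x₁), add_comm x₁ x₂, add_comm x₂ x₁, add_comm x₁ x₂]
    refine resonance_aux (Or.inl ?_)
    rw [add_comm x₂ x₁, h]; ring

end Brackets

lemma weight_lower_bound {s r σ t : ℝ} (ht : t = max 0 (-s)) (hr2 : r ≤ 1 + s)
    {sgn : ℝ} (hsgn : sgn = 1 ∨ sgn = -1) (x₁ t₁ x₂ t₂ : ℝ) :
    (jap (t₁ - x₁) ^ (σ - 2 * t) * jap (t₂ + x₂) ^ (σ - 2 * t)) ≤ 32 ^ |s| *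
      (jap x₁ ^ s * jap (t₁ - x₁) ^ σ * jap x₂ ^ s * jap (t₂ + x₂) ^ σ *
        jap (x₁ + x₂) ^ (1 - r) * jap (t₁ + t₂ + sgn * |x₁ + x₂|) ^ (2 * t)) := by
  have hres := resonance hsgn x₁ t₁ x₂ t₂
  have hadd := jap_add_le x₁ x₂
  have hJ1 := one_le_jap (x₁ + x₂)
  have hA := jap_pos (t₁ - x₁)
  have hB := jap_pos (t₂ + x₂)
  have hM := jap_pos x₁
  have hN := jap_pos x₂
  have hJ := jap_pos (x₁ + x₂)
  have hS := jap_pos (t₁ + t₂ + sgn * |x₁ + x₂|)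
  generalize jap (t₁ + t₂ + sgn * |x₁ + x₂|) = S at *
  generalize jap (x₁ + x₂) = J at *
  generalize jap (t₁ - x₁) = A at *
  generalize jap (t₂ + x₂) = B at *
  generalize jap x₁ = M at *
  generalize jap x₂ = N at *
  rcases le_or_gt 0 s with h0 | h0
  · have ht0 : t = 0 := by rw [ht, max_eq_left]; linarith
    subst ht0
    have h1 : J ^ (r - 1) ≤ 32 ^ s * (M ^ s * N ^ s) := by
      calc J ^ (r - 1) ≤ J ^ s := Real.rpow_le_rpow_of_exponent_le hJ1 (by linarith)
        _ ≤ (32 * (M * N)) ^ s := by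
            refine Real.rpow_le_rpow hJ.le ?_ h0
            nlinarith [mul_pos hM hN]
        _ = _ := by rw [Real.mul_rpow (by norm_num) (by positivity), Real.mul_rpow hM.le hN.le]
    have h2 : 1 ≤ 32 ^ s * (M ^ s * N ^ s) * J ^ (1 - r) := by
      calc 1 = J ^ (r - 1) * J ^ (1 - r) := by
            rw [← Real.rpow_add hJ]; simp
        _ ≤ _ := by gcongr
    rw [abs_of_nonneg h0]
    simp only [mul_zero, sub_zero, Real.rpow_zero, mul_one]
    calc A ^ σ * B ^ σ = A ^ σ * B ^ σ * 1 := by ring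
      _ ≤ A ^ σ * B ^ σ * (32 ^ s * (M ^ s * N ^ s) * J ^ (1 - r)) := by gcongr
      _ = _ := by ring
  · have hts : s = -t := by rw [ht, max_eq_right] <;> linarith
    have ht0 : 0 < t := by linarith
    subst hts
    have h1 : M ^ t * N ^ t ≤ 32 ^ t * (J ^ t * S ^ (2 * t) * (A ^ (2 * t) * B ^ (2 * t))) := by
      have := Real.rpow_le_rpow (by positivity) hres ht0.le
      rw [Real.mul_rpow hM.le hN.le, Real.mul_rpow (by norm_num) (by positivity),
        Real.mul_rpow (by positivity) (by positivity),
        Real.mul_rpow (by positivity) (by positivity), mul_pow,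
        Real.mul_rpow (by positivity) (by positivity)] at this
      simpa [Real.rpow_mul hS.le, Real.rpow_mul hA.le, Real.rpow_mul hB.le] using this
    have h2 : J ^ t ≤ J ^ (1 - r) := Real.rpow_le_rpow_of_exponent_le hJ1 (by linarith)
    rw [abs_neg, abs_of_pos ht0, Real.rpow_sub hA, Real.rpow_sub hB, Real.rpow_neg hM.le,
      Real.rpow_neg hN.le]
    have hMt := Real.rpow_pos_of_pos hM t
    have hNt := Real.rpow_pos_of_pos hN t
    have hAt := Real.rpow_pos_of_pos hA (2 * t)
    have hBt := Real.rpow_pos_of_pos hB (2 * t)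
    rw [div_mul_div_comm, div_le_iff₀ (by positivity)]
    have h3 : 1 ≤ (M ^ t)⁻¹ * (N ^ t)⁻¹ *
        (32 ^ t * (J ^ (1 - r) * S ^ (2 * t) * (A ^ (2 * t) * B ^ (2 * t)))) := by
      rw [← mul_inv, ← div_eq_inv_mul, one_le_div (by positivity)]
      exact h1.trans (by gcongr)
    calc A ^ σ * B ^ σ = A ^ σ * B ^ σ * 1 := by ring
      _ ≤ A ^ σ * B ^ σ * ((M ^ t)⁻¹ * (N ^ t)⁻¹ *
        (32 ^ t * (J ^ (1 - r) * S ^ (2 * t) * (A ^ (2 * t) * B ^ (2 * t))))) := by gcongr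
      _ = _ := by ring

lemma lintegral_jap_lt_top {q : ℝ} (hq : 1 < q) :
    ∫⁻ x : ℝ, ENNReal.ofReal (jap x ^ (-q)) < ⊤ := by
  have h := integrable_rpow_neg_one_add_norm_sq (E := ℝ) (μ := volume) (r := q) (by simpa using hq)
  refine lt_of_le_of_lt (le_of_eq ?_) h.lintegral_lt_top
  refine lintegral_congr fun x => ?_
  rw [jap, Real.sqrt_eq_rpow, ← Real.rpow_mul (by positivity), Real.norm_eq_abs, sq_abs]
  congr 2; ring

lemma lintegral_sub_two_mul {F : ℝ → ENNReal} (hF : Measurable F) (c : ℝ) :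
    ∫⁻ x : ℝ, F (c - 2 * x) = ENNReal.ofReal |(2 : ℝ)⁻¹| * ∫⁻ x, F x := by
  have h : ∫⁻ x : ℝ, F (c - 2 * x) = ∫⁻ y, F (c - y) ∂(Measure.map ((2 : ℝ) * ·) volume) := by
    rw [lintegral_map (by fun_prop) (by fun_prop)]
  rw [h, Real.map_volume_mul_left two_ne_zero, lintegral_smul_measure, smul_eq_mul,
    lintegral_sub_left_eq_self]

/-- Integration in the null coordinates `(τ₁ - ξ₁, τ₂ + ξ₂)` for fixed `ξ₁ + ξ₂ = X`, `τ₁ + τ₂ = T`. -/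
lemma lintegral_null_coords {F : ℝ → ENNReal} (hF : Measurable F) (X T : ℝ) :
    ∫⁻ z : ℝ × ℝ, F (z.2 - z.1) * F ((T - z.2) + (X - z.1)) =
      (∫⁻ x, F x) * (ENNReal.ofReal |(2 : ℝ)⁻¹| * ∫⁻ x, F x) := by
  rw [Measure.volume_eq_prod, lintegral_prod _ (by fun_prop)]
  calc ∫⁻ x : ℝ, ∫⁻ y : ℝ, F (y - x) * F ((T - y) + (X - x))
      = ∫⁻ x : ℝ, ∫⁻ u : ℝ, F u * F ((T - u + X) - 2 * x) := by
        refine lintegral_congr fun x => ?_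
        rw [← lintegral_sub_right_eq_self (fun u => F u * F ((T - u + X) - 2 * x)) x]
        refine lintegral_congr fun y => ?_
        congr 2; ring
    _ = ∫⁻ u : ℝ, ∫⁻ x : ℝ, F u * F ((T - u + X) - 2 * x) :=
        lintegral_lintegral_swap (by unfold Function.uncurry; fun_prop)
    _ = ∫⁻ u : ℝ, F u * (ENNReal.ofReal |(2 : ℝ)⁻¹| * ∫⁻ x, F x) := by
        refine lintegral_congr fun u => ?_
        rw [lintegral_const_mul _ (by fun_prop), lintegral_sub_two_mul hF]
    _ = _ := lintegral_mul_const _ hF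

lemma lintegral_sum_weight {F : ℝ → ENNReal} (hF : Measurable F) {W : ℝ × ℝ → ENNReal}
    (hW : Measurable W) :
    ∫⁻ z : (ℝ × ℝ) × (ℝ × ℝ), W (z.1.1 + z.2.1, z.1.2 + z.2.2) *
        (F (z.1.2 - z.1.1) * F (z.2.2 + z.2.1)) =
      (∫⁻ x, W x) * ((∫⁻ x, F x) * (ENNReal.ofReal |(2 : ℝ)⁻¹| * ∫⁻ x, F x)) := by
  rw [Measure.volume_eq_prod, lintegral_prod _ (by fun_prop)]
  calc ∫⁻ x : ℝ × ℝ, ∫⁻ y : ℝ × ℝ, W (x.1 + y.1, x.2 + y.2) * (F (x.2 - x.1) * F (y.2 + y.1))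
      = ∫⁻ x : ℝ × ℝ, ∫⁻ u : ℝ × ℝ,
          W u * (F (x.2 - x.1) * F ((u.2 - x.2) + (u.1 - x.1))) := by
        refine lintegral_congr fun x => ?_
        rw [← lintegral_add_left_eq_self
          (fun u : ℝ × ℝ => W u * (F (x.2 - x.1) * F ((u.2 - x.2) + (u.1 - x.1)))) x]
        refine lintegral_congr fun y => ?_
        simp only [Prod.fst_add, Prod.snd_add, add_sub_cancel_left]
        rfl
    _ = ∫⁻ u : ℝ × ℝ, ∫⁻ x : ℝ × ℝ,
          W u * (F (x.2 - x.1) * F ((u.2 - x.2) + (u.1 - x.1))) :=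
        lintegral_lintegral_swap (by unfold Function.uncurry; fun_prop)
    _ = ∫⁻ u : ℝ × ℝ, W u * ((∫⁻ x, F x) * (ENNReal.ofReal |(2 : ℝ)⁻¹| * ∫⁻ x, F x)) := by
        refine lintegral_congr fun u => ?_
        rw [lintegral_const_mul _ (by fun_prop), lintegral_null_coords hF]
    _ = _ := lintegral_mul_const _ hW

/-- The trilinear estimate for the kernel `G (τ₁ - ξ₁) * G (τ₂ + ξ₂)`. -/
lemma trilinear_bound {p p' : ℝ} (hp : p'.HolderConjugate p) {G : ℝ → ENNReal} (hG : Measurable G)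
    {v₁ v₂ w : ℝ × ℝ → ENNReal} (h₁ : Measurable v₁) (h₂ : Measurable v₂) (hw : Measurable w) :
    ∫⁻ z : (ℝ × ℝ) × (ℝ × ℝ), (v₁ z.1 * v₂ (-z.2.1, -z.2.2)) *
        (w (z.1.1 + z.2.1, z.1.2 + z.2.2) * (G (z.1.2 - z.1.1) * G (z.2.2 + z.2.1))) ≤
      ((∫⁻ x, G x ^ p) * (ENNReal.ofReal |(2 : ℝ)⁻¹| * ∫⁻ x, G x ^ p)) ^ (1 / p) *
        (∫⁻ x : ℝ × ℝ, v₁ x ^ p') ^ (1 / p') * (∫⁻ x : ℝ × ℝ, v₂ x ^ p') ^ (1 / p') *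
        (∫⁻ x : ℝ × ℝ, w x ^ p) ^ (1 / p) := by
  have hp0 : 0 ≤ p := hp.symm.pos.le
  have hp0' : 0 ≤ p' := hp.pos.le
  have hv : ∫⁻ z : (ℝ × ℝ) × (ℝ × ℝ), (v₁ z.1 * v₂ (-z.2.1, -z.2.2)) ^ p' =
      (∫⁻ x : ℝ × ℝ, v₁ x ^ p') * ∫⁻ x : ℝ × ℝ, v₂ x ^ p' := by
    simp only [ENNReal.mul_rpow_of_nonneg _ _ hp0']
    rw [Measure.volume_eq_prod,
      lintegral_prod_mul (f := fun x => v₁ x ^ p') (g := fun x : ℝ × ℝ => v₂ (-x.1, -x.2) ^ p')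
      (by fun_prop) (by fun_prop)]
    congr 1
    exact lintegral_neg_eq_self (μ := (volume : Measure (ℝ × ℝ))) (fun x => v₂ x ^ p')
  have hk : ∫⁻ z : (ℝ × ℝ) × (ℝ × ℝ), (w (z.1.1 + z.2.1, z.1.2 + z.2.2) *
        (G (z.1.2 - z.1.1) * G (z.2.2 + z.2.1))) ^ p =
      (∫⁻ x, w x ^ p) * ((∫⁻ x, G x ^ p) * (ENNReal.ofReal |(2 : ℝ)⁻¹| * ∫⁻ x, G x ^ p)) := by
    simp only [ENNReal.mul_rpow_of_nonneg _ _ hp0]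
    exact lintegral_sum_weight (F := fun x => G x ^ p) (W := fun x => w x ^ p)
      (by fun_prop) (by fun_prop)
  refine (ENNReal.lintegral_mul_le_Lp_mul_Lq volume hp
    (f := fun z : (ℝ × ℝ) × (ℝ × ℝ) => v₁ z.1 * v₂ (-z.2.1, -z.2.2))
    (g := fun z => w (z.1.1 + z.2.1, z.1.2 + z.2.2) * (G (z.1.2 - z.1.1) * G (z.2.2 + z.2.1)))
    (by fun_prop) (by fun_prop)).trans (le_of_eq ?_)
  rw [hv, hk, ENNReal.mul_rpow_of_nonneg _ _ (one_div_nonneg.2 hp0'),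
    ENNReal.mul_rpow_of_nonneg _ _ (one_div_nonneg.2 hp0)]
  ring

theorem stmt_13 (p p' s r : ℝ) (hp : 1 < p) (hp2 : p ≤ 2) (hpp' : 1 / p + 1 / p' = 1)
    (hs : s > -(1 / 2) + 1 / (2 * p)) (hrs : r ≥ |s|) (hr1 : r > 2 / p - 1) (hr2 : r ≤ 1 + s) :
    ∃ ε σ ρ : ℝ, 0 < ε ∧ 1 / p < σ ∧ σ < 1 ∧ 1 / p < ρ ∧ ρ < 1 ∧
      ∃ C : ℝ, 0 < C ∧ ∀ sgn : ℝ, (sgn = 1 ∨ sgn = -1) →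
        ∀ v₁ v₂ w : ℝ × ℝ → ENNReal, Measurable v₁ → Measurable v₂ → Measurable w →
          (∫⁻ z : (ℝ × ℝ) × (ℝ × ℝ),
            (v₁ z.1 * v₂ (-z.2.1, -z.2.2) * w (z.1.1 + z.2.1, z.1.2 + z.2.2)) /
              ENNReal.ofReal (jap z.1.1 ^ s * jap (z.1.2 - z.1.1) ^ σ *
                jap z.2.1 ^ s * jap (z.2.2 + z.2.1) ^ σ *
                jap (z.1.1 + z.2.1) ^ (1 - r) *
                jap (z.1.2 + z.2.2 + sgn * |z.1.1 + z.2.1|) ^ (1 - ρ - ε))) ≤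
            ENNReal.ofReal C *
              (∫⁻ x : ℝ × ℝ, v₁ x ^ p') ^ (1 / p') *
              (∫⁻ x : ℝ × ℝ, v₂ x ^ p') ^ (1 / p') *
              (∫⁻ x : ℝ × ℝ, w x ^ p) ^ (1 / p) := by
  have hp0 : 0 < p := by linarith
  have hconj : p'.HolderConjugate p :=
    (Real.holderConjugate_iff.2 ⟨hp, by simpa using hpp'⟩).symm
  obtain ⟨t, ht⟩ : ∃ t, t = max 0 (-s) := ⟨_, rfl⟩
  have ht0 : 0 ≤ t := ht ▸ le_max_left _ _
  have hip : 1 / p < 1 := by rw [div_lt_one hp0]; exact hp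
  have ht1 : 2 * t < 1 - 1 / p := by
    have h : 1 / (2 * p) = 1 / p / 2 := by field_simp
    rw [h] at hs
    rcases max_choice 0 (-s) with h | h <;> rw [h] at ht <;> linarith
  -- `σ` is the midpoint of `(2 t + 1 / p, 1)`, and `ε = ρ - 1 / p` solves `1 - ρ - ε = 2 t`.
  obtain ⟨σ, hσ⟩ : ∃ σ, σ = (2 * t + 1 / p + 1) / 2 := ⟨_, rfl⟩
  have hκ : 1 < (σ - 2 * t) * p := by
    have : 1 / p < σ - 2 * t := by linarith
    rwa [div_lt_iff₀ hp0] at this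
  refine ⟨(1 - 1 / p - 2 * t) / 2, σ, 1 / p + (1 - 1 / p - 2 * t) / 2, by linarith, by linarith,
    by linarith, by linarith, by linarith, ?_⟩
  have hexp : 1 - (1 / p + (1 - 1 / p - 2 * t) / 2) - (1 - 1 / p - 2 * t) / 2 = 2 * t := by ring
  rw [hexp]
  let G : ℝ → ENNReal := fun x => ENNReal.ofReal (jap x ^ (-(σ - 2 * t)))
  have hG : Measurable G := (measurable_jap.pow_const _).ennreal_ofReal
  have hGI : ∫⁻ x, G x ^ p < ⊤ := by
    refine lt_of_le_of_lt (le_of_eq ?_) (lintegral_jap_lt_top hκ)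
    refine lintegral_congr fun x => ?_
    have hj := jap_pos x
    simp only [G]
    rw [ENNReal.ofReal_rpow_of_pos (by positivity), ← Real.rpow_mul hj.le, neg_mul]
  obtain ⟨K, hK⟩ : ∃ K, K =
    ((∫⁻ x, G x ^ p) * (ENNReal.ofReal |(2 : ℝ)⁻¹| * ∫⁻ x, G x ^ p)) ^ (1 / p) := ⟨_, rfl⟩
  have hKtop : K ≠ ⊤ := by
    rw [hK]
    exact ENNReal.rpow_ne_top_of_nonneg (by positivity)
      (ENNReal.mul_ne_top hGI.ne (ENNReal.mul_ne_top ENNReal.ofReal_ne_top hGI.ne))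
  have hc : (0 : ℝ) < 32 ^ |s| := by positivity
  -- Adding `1` keeps the constant positive without evaluating `K`.
  refine ⟨32 ^ |s| * (K.toReal + 1), by positivity, ?_⟩
  intro sgn hsgn v₁ v₂ w h₁ h₂ hw
  have hpt : ∀ z : (ℝ × ℝ) × (ℝ × ℝ),
      (v₁ z.1 * v₂ (-z.2.1, -z.2.2) * w (z.1.1 + z.2.1, z.1.2 + z.2.2)) /
              ENNReal.ofReal (jap z.1.1 ^ s * jap (z.1.2 - z.1.1) ^ σ *
                jap z.2.1 ^ s * jap (z.2.2 + z.2.1) ^ σ *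
                jap (z.1.1 + z.2.1) ^ (1 - r) *
                jap (z.1.2 + z.2.2 + sgn * |z.1.1 + z.2.1|) ^ (2 * t)) ≤
      ENNReal.ofReal (32 ^ |s|) * ((v₁ z.1 * v₂ (-z.2.1, -z.2.2)) *
        (w (z.1.1 + z.2.1, z.1.2 + z.2.2) * (G (z.1.2 - z.1.1) * G (z.2.2 + z.2.1)))) := by
    rintro ⟨⟨x₁, t₁⟩, ⟨x₂, t₂⟩⟩
    have hlow := weight_lower_bound (σ := σ) ht hr2 hsgn x₁ t₁ x₂ t₂
    have hA := jap_pos (t₁ - x₁)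
    have hB := jap_pos (t₂ + x₂)
    have hM := jap_pos x₁
    have hN := jap_pos x₂
    have hJ := jap_pos (x₁ + x₂)
    have hS := jap_pos (t₁ + t₂ + sgn * |x₁ + x₂|)
    have hD : 0 < jap x₁ ^ s * jap (t₁ - x₁) ^ σ * jap x₂ ^ s * jap (t₂ + x₂) ^ σ *
        jap (x₁ + x₂) ^ (1 - r) * jap (t₁ + t₂ + sgn * |x₁ + x₂|) ^ (2 * t) := by positivity
    have hinv : (ENNReal.ofReal (jap x₁ ^ s * jap (t₁ - x₁) ^ σ * jap x₂ ^ s *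
        jap (t₂ + x₂) ^ σ * jap (x₁ + x₂) ^ (1 - r) *
        jap (t₁ + t₂ + sgn * |x₁ + x₂|) ^ (2 * t)))⁻¹ ≤
        ENNReal.ofReal (32 ^ |s|) * (G (t₁ - x₁) * G (t₂ + x₂)) := by
      simp only [G]
      rw [← ENNReal.ofReal_inv_of_pos hD, ← ENNReal.ofReal_mul (by positivity),
        ← ENNReal.ofReal_mul (by positivity)]
      apply ENNReal.ofReal_le_ofReal
      rw [Real.rpow_neg hA.le, Real.rpow_neg hB.le, ← mul_inv, ← div_eq_mul_inv,
        inv_le_iff_one_le_mul₀ hD, div_mul_eq_mul_div, one_le_div (by positivity)]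
      exact hlow
    simp only
    calc _ ≤ v₁ (x₁, t₁) * v₂ (-x₂, -t₂) * w (x₁ + x₂, t₁ + t₂) *
          (ENNReal.ofReal (32 ^ |s|) * (G (t₁ - x₁) * G (t₂ + x₂))) := by
          rw [div_eq_mul_inv]; gcongr
      _ = _ := by ring
  calc _ ≤ _ := lintegral_mono hpt
    _ = _ := lintegral_const_mul' _ _ ENNReal.ofReal_ne_top
    _ ≤ _ := mul_le_mul_right (trilinear_bound hconj hG h₁ h₂ hw) _
    _ ≤ _ := by
      rw [← hK, ENNReal.ofReal_mul hc.le, ← mul_assoc, ← mul_assoc, ← mul_assoc]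
      gcongr
      exact (ENNReal.ofReal_toReal hKtop).symm.le.trans (ENNReal.ofReal_le_ofReal (by linarith))
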